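/- arXiv:1302.3709 — 2 statements merged into one kernel-verified Lean document; each statement's English description precedes it below -/
import Mathlib

section
/- Let {C₁,…,C₉} be a complete set of Pauli classes in dimension d = 8 (n = 3 qubits). Then there exists a maximal commuting Pauli class S such that every member of S is equal up to phase to a member of C₁ ∪ ⋯ ∪ C₅ and S is not equal up to phase (as a set of operators) to any of C₁,…,C₅; moreover S is unique: any two maximal commuting Pauli classes with these properties contain the same operators up to phase. -/
open Matrix

noncomputable section

/-- Matrices on the Hilbert space of `n` qubits, with rows and columns indexed by
bit strings `Fin n → Fin 2`. -/
abbrev QMat (n : ℕ) := Matrix (Fin n → Fin 2) (Fin n → Fin 2) ℂ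

/-- The single-qubit identity. -/
def pI : Matrix (Fin 2) (Fin 2) ℂ := 1

/-- The single-qubit Pauli X. -/
def pX : Matrix (Fin 2) (Fin 2) ℂ := !![0, 1; 1, 0]

/-- The single-qubit Pauli Y. -/
def pY : Matrix (Fin 2) (Fin 2) ℂ := !![0, -Complex.I; Complex.I, 0]

/-- The single-qubit Pauli Z. -/
def pZ : Matrix (Fin 2) (Fin 2) ℂ := !![1, 0; 0, -1]

/-- The `n`-fold Kronecker product `W 0 ⊗ ⋯ ⊗ W (n-1)`, realized on indices
`Fin n → Fin 2`. -/
def kron (n : ℕ) (W : Fin n → Matrix (Fin 2) (Fin 2) ℂ) : QMat n :=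
  fun v w => ∏ j, W j (v j) (w j)

/-- `M` is an `n`-qubit Pauli operator: an `n`-fold Kronecker product of matrices
from `{I₂, X, Y, Z}`. -/
def IsPauliOp (n : ℕ) (M : QMat n) : Prop :=
  ∃ W : Fin n → Matrix (Fin 2) (Fin 2) ℂ,
    (∀ j, W j = pI ∨ W j = pX ∨ W j = pY ∨ W j = pZ) ∧ M = kron n W

/-- Two matrices are equal up to phase if one is a nonzero scalar multiple of the other. -/
def PhaseEq {m : Type*} (A B : Matrix m m ℂ) : Prop := ∃ c : ℂ, c ≠ 0 ∧ A = c • B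

/-- A maximal commuting Pauli class in dimension `d = 2 ^ n`: a set of `d - 1`
pairwise commuting non-identity `n`-qubit Pauli operators, pairwise distinct up to phase. -/
def IsMaxClass (n : ℕ) (C : Set (QMat n)) : Prop :=
  C.Finite ∧ C.ncard = 2 ^ n - 1 ∧
  (∀ U ∈ C, IsPauliOp n U ∧ U ≠ 1) ∧
  (∀ U ∈ C, ∀ V ∈ C, U * V = V * U) ∧
  (∀ U ∈ C, ∀ V ∈ C, U ≠ V → ¬ PhaseEq U V)

/-- Two classes are disjoint if no member of one is equal up to phase to a member of the other. -/
def ClassDisjoint {n : ℕ} (C D : Set (QMat n)) : Prop :=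
  ∀ U ∈ C, ∀ V ∈ D, ¬ PhaseEq U V

/-- Two classes are equal up to phase (as sets of operators). -/
def ClassPhaseEq {n : ℕ} (C D : Set (QMat n)) : Prop :=
  (∀ U ∈ C, ∃ V ∈ D, PhaseEq U V) ∧ (∀ V ∈ D, ∃ U ∈ C, PhaseEq U V)

/-- The standard Hermitian inner product on `ι → ℂ` (conjugate-linear in the first slot). -/
def cinner {ι : Type*} [Fintype ι] (x y : ι → ℂ) : ℂ :=
  ∑ k, (starRingEnd ℂ) (x k) * y k


/-! ### Combinatorial model: labels of Pauli operators are natural numbers below 64 -/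

/-- Commutation of single-qubit labels `0,1,2,3 = I,X,Y,Z`. -/
def comm1 (a b : ℕ) : Bool := a == 0 || b == 0 || a == b

/-- Commutation of three-qubit labels (base 4 digits). -/
def commN (a b : ℕ) : Bool :=
  xor (comm1 (a % 4) (b % 4)) (xor (comm1 (a / 4 % 4) (b / 4 % 4)) (comm1 (a / 16 % 4) (b / 16 % 4)))

/-- Every Lagrangian (as a bit mask of labels) with its singular vector in `F₂⁸` (as a byte). -/
def lagTable : List (ℕ × ℕ) := [
  (1, 3342386), (2, 5519032976644), (4, 5570644), (5, 10027160), (6, 5764607866715504644), (8,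
  2323858542670383104), (9, 1154050153429090304), (10, 40542294666903560), (15,
  10378826816252055560), (16, 151587080), (17, 1115767424), (18, 144686968549409024), (20,
  612443264), (21, 2416545800), (22, 9232414970254459904), (24, 79306571139104), (25,
  9511602491523858464), (26, 158368329142280), (31, 648518967232561160), (32,
  3458767812358569986), (33, 216225558675062786), (34, 4647715925699592704), (36,
  5188291906266857504), (37, 9511681577844867104), (38, 1155177839943778304), (40,
  2341872925073736704), (41, 1155175778390933504), (42, 9232380353346274304), (47,
  1153493525606703104), (51, 9385783098416857664), (55, 5673482180362304), (59,
  594492751664390144), (60, 9520891087237973024), (61, 5145716632584224), (62,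
  73324369417339904), (64, 2216789024), (65, 1210140704), (66, 2342012681177007104), (68,
  50529026), (69, 805515266), (70, 578714759797670144), (72, 180161594597064704), (73,
  74344854177449984), (74, 2306476347239174144), (79, 297240049576607744), (80, 1342525444),
  (81, 675358784), (82, 22605959150960644), (84, 84215044), (85, 2185331264), (86,
  361695345073194244), (88, 5211686323617824), (89, 5197435444962281504), (90,
  162134122339794944), (95, 4612847113444265984), (96, 38280888892653584), (97,
  19140882534105104), (98, 2882303849597501504), (100, 219043332146), (101, 14355223812243506),
  (102, 143215684518464), (104, 73219230222255104), (105, 162147213200359424), (106,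
  2630383657361089664), (111, 6827967812468864), (115, 297255201990017024), (119,
  72691464643019264), (123, 4755801310186438784), (124, 145277268821024), (125,
  5188146850254815264), (126, 40136469390464), (128, 10376303437075709960), (129,
  2594145953134411904), (130, 4620694352094562304), (132, 4755840788923416704), (133,
  648676676025188360), (134, 1153489402501013504), (136, 3311419785986), (137,
  3458764720029302786), (138, 9934259357960), (143, 10376294160087908360), (144, 657129996440),
  (145, 19140444454125584), (146, 44259637995584), (148, 9570441274851344), (149,
  43065671436730520), (150, 9367487311501066304), (152, 289365106545000704), (153,
  9241457353881158144), (154, 651051621131749640), (159, 40690726471729160), (160,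
  5764613020597616644), (161, 2882446698030039104), (162, 22523497037168644), (164,
  360375931125104644), (165, 9367531205397053504), (166, 5766014897917808644), (168,
  13514098222301186), (169, 3459608938750685186), (170, 9241387544547951104), (175,
  1154056338087624704), (179, 9225659030704492544), (183, 180152918895509504), (187,
  72761557439742464), (188, 9225694223129513984), (189, 324268244410179584), (190,
  585485560966037504), (195, 2900599635003320384), (199, 5772436716912704), (203,
  2323927913923610624), (204, 217017207043916546), (205, 13563575490576386), (206,
  289358483806486784), (211, 74379900575811584), (215, 324276774085074944), (219,
  4620728676949428224), (220, 578716967377174784), (221, 4647855827829522944), (222,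
  144682553390399744), (227, 2306546732089217024), (231, 585470700605947904), (235,
  2594073489551917184), (236, 52789443047426), (237, 216172989077520386), (238, 73121818231424),
  (240, 23925373020405844), (241, 9570733328171024), (242, 360288315129200644), (244,
  365072220244), (245, 38280742865993744), (246, 87982405079044), (248, 594480098883805184),
  (249, 4612952690719330304), (250, 6794982966952064), (255, 4792111478498935424)]

/-- Bilinear form on bytes. -/
def Bn (x y : ℕ) : Bool :=
  xor (x.testBit 0 && y.testBit 1) (xor (x.testBit 1 && y.testBit 0)
  (xor (x.testBit 2 && y.testBit 3) (xor (x.testBit 3 && y.testBit 2)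
  (xor (x.testBit 4 && y.testBit 5) (xor (x.testBit 5 && y.testBit 4)
  (xor (x.testBit 6 && y.testBit 7) (x.testBit 7 && y.testBit 6)))))))

/-- Quadratic form on bytes. -/
def Qn (x : ℕ) : Bool :=
  xor (x.testBit 0 && x.testBit 1) (xor (x.testBit 2 && x.testBit 3)
  (xor (x.testBit 4 && x.testBit 5) (x.testBit 6 && x.testBit 7)))

/-- Search through all commuting families of `k` labels. -/
def goSearch : ℕ → List ℕ → ℕ → ℕ → Bool
  | _, _, 0, m => (lagTable.map Prod.snd).elem m
  | 0, _, _ + 1, _ => false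
  | _ + 1, [], _ + 1, _ => true
  | f + 1, p :: r, k + 1, m =>
    Nat.ble (r.length + 1) k ||
      (goSearch f (r.filter (commN p)) k (m ||| 2 ^ p) && goSearch f r (k + 1) m)

theorem goSearch_top : goSearch 64 (List.range' 1 63) 7 0 = true := by decide +kernel

/-- Bit `z` of this number is the parity of the byte `z`. -/
def parMask : ℕ :=
  47758914269546354982683078068829456704164423862093743397580034411621752859030

/-- Exchange the bits `2 i` and `2 i + 1`. -/
def swapB (x : ℕ) : ℕ := (x &&& 85) * 2 + (x &&& 170) / 2

theorem table_disj0 : (lagTable.all fun s => lagTable.all fun t =>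
    (Nat.land s.2 t.2 == 0) == parMask.testBit (Nat.land (swapB s.1) t.1)) = true := by
  decide +kernel

theorem parMask_spec : ((List.range 256).all fun z => parMask.testBit z ==
    xor (z.testBit 1) (xor (z.testBit 0) (xor (z.testBit 3) (xor (z.testBit 2)
    (xor (z.testBit 5) (xor (z.testBit 4) (xor (z.testBit 7) (z.testBit 6)))))))) = true := by
  decide +kernel

theorem swapB_spec : ((List.range 256).all fun x => Nat.blt (swapB x) 256 &&
    (List.range 4).all fun i => (swapB x).testBit (2 * i) == x.testBit (2 * i + 1) &&
      (swapB x).testBit (2 * i + 1) == x.testBit (2 * i)) = true := by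
  decide +kernel

theorem Bn_eq (x y : ℕ) (hx : x < 256) : parMask.testBit (Nat.land (swapB x) y) = Bn x y := by
  have h := List.all_eq_true.mp swapB_spec x (List.mem_range.mpr hx)
  rw [Bool.and_eq_true] at h
  have hlt : swapB x < 256 := Nat.le_of_ble_eq_true h.1
  have hb : ∀ i < 4, (swapB x).testBit (2 * i) = x.testBit (2 * i + 1) ∧
      (swapB x).testBit (2 * i + 1) = x.testBit (2 * i) := by
    intro i hi
    have h3 := List.all_eq_true.mp h.2 i (List.mem_range.mpr hi)
    simpa using h3
  have h0 := hb 0 (by norm_num)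
  have h1 := hb 1 (by norm_num)
  have h2 := hb 2 (by norm_num)
  have h3 := hb 3 (by norm_num)
  norm_num at h0 h1 h2 h3
  change parMask.testBit (swapB x &&& y) = _
  have hz : swapB x &&& y < 256 := lt_of_le_of_lt Nat.and_le_left hlt
  have hp := List.all_eq_true.mp parMask_spec _ (List.mem_range.mpr hz)
  rw [beq_iff_eq] at hp
  rw [hp, Bn]
  simp only [Nat.testBit_and]
  simp only [Nat.testBit_zero] at *
  rw [h0.1, h0.2, h1.1, h1.2, h2.1, h2.2, h3.1, h3.2]

theorem table_sing : (lagTable.all fun s => Nat.blt s.1 256 && !(Qn s.1)) = true := by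
  decide +kernel

theorem table_all : ((List.range 256).all fun n =>
    n == 0 || Qn n || (lagTable.map Prod.fst).elem n) = true := by decide +kernel

theorem table_fst : (lagTable.map Prod.fst).Nodup := by decide +kernel

theorem table_snd : (lagTable.map Prod.snd).Nodup := by decide +kernel

/-- The labels in a mask. -/
def pts (m : ℕ) : List ℕ := (List.range 64).filter fun p => m.testBit p

theorem table_lag : (lagTable.all fun s => (pts s.2).length == 7 && !(s.2.testBit 0) &&
    Nat.blt s.2 (2 ^ 64) &&
    (pts s.2).all fun p => (pts s.2).all fun q => commN p q) = true := by decide +kernel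

theorem table_disj : (lagTable.all fun s => lagTable.all fun t =>
    (Nat.land s.2 t.2 == 0) == Bn s.1 t.1) = true := by
  rw [List.all_eq_true]
  intro s hs
  rw [List.all_eq_true]
  intro t ht
  have h := List.all_eq_true.mp table_sing s hs
  rw [Bool.and_eq_true] at h
  rw [← Bn_eq s.1 t.1 (Nat.le_of_ble_eq_true h.1)]
  exact List.all_eq_true.mp (List.all_eq_true.mp table_disj0 s hs) t ht

/-- A Lagrangian: seven pairwise commuting nonzero labels. -/
def IsLag (S : Finset ℕ) : Prop :=
  S.card = 7 ∧ (∀ p ∈ S, 0 < p ∧ p < 64) ∧ ∀ p ∈ S, ∀ q ∈ S, commN p q = true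

/-- The set of labels in a mask. -/
def Lset (m : ℕ) : Finset ℕ := (Finset.range 64).filter fun p => m.testBit p = true

theorem mem_Lset (m p : ℕ) : p ∈ Lset m ↔ p < 64 ∧ m.testBit p = true := by
  simp [Lset]

theorem goSearch_spec (f : ℕ) : ∀ (l : List ℕ) (k m : ℕ), goSearch f l k m = true →
    ∀ s : List ℕ, s.Sublist l → s.Pairwise (fun p q => commN p q = true) → s.length = k →
    s.foldl (fun a p => a ||| 2 ^ p) m ∈ lagTable.map Prod.snd := by
  induction f with
  | zero =>
    intro l k m h s hs hp hk
    cases k with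
    | zero =>
      rw [goSearch] at h
      rw [List.length_eq_zero_iff.mp hk]
      exact List.elem_iff.mp h
    | succ k => simp [goSearch] at h
  | succ f ih =>
    intro l k m h s hs hp hk
    cases k with
    | zero =>
      rw [goSearch] at h
      rw [List.length_eq_zero_iff.mp hk]
      exact List.elem_iff.mp h
    | succ k =>
      cases l with
      | nil =>
        rw [List.sublist_nil] at hs
        subst hs
        simp at hk
      | cons p r =>
        rw [goSearch, Bool.or_eq_true, Bool.and_eq_true] at h
        rcases h with h | ⟨h1, h2⟩
        · have h3 := Nat.le_of_ble_eq_true h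
          have h4 := hs.length_le
          simp only [List.length_cons] at h4
          omega
        · rcases List.sublist_cons_iff.mp hs with h3 | ⟨s', rfl, h3⟩
          · exact ih r (k + 1) m h2 s h3 hp hk
          · rw [List.pairwise_cons] at hp
            rw [List.foldl_cons]
            refine ih _ _ _ h1 s' ?_ hp.2 (by simpa using hk)
            have h5 := h3.filter (commN p)
            rwa [List.filter_eq_self.mpr hp.1] at h5

theorem testBit_foldl (s : List ℕ) : ∀ (m p : ℕ),
    (s.foldl (fun a p => a ||| 2 ^ p) m).testBit p = true ↔ (m.testBit p = true ∨ p ∈ s) := by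
  induction s with
  | nil => intro m p; simp
  | cons q s ih =>
    intro m p
    rw [List.foldl_cons, ih, Nat.testBit_or, Nat.testBit_two_pow]
    simp only [Bool.or_eq_true, decide_eq_true_eq, List.mem_cons]
    constructor
    · rintro ((h | h) | h)
      · exact Or.inl h
      · exact Or.inr (Or.inl h.symm)
      · exact Or.inr (Or.inr h)
    · rintro (h | h | h)
      · exact Or.inl (Or.inl h)
      · exact Or.inl (Or.inr h.symm)
      · exact Or.inr h

theorem lag_in_table (S : Finset ℕ) (hS : IsLag S) : ∃ t ∈ lagTable, Lset t.2 = S := by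
  obtain ⟨hc, hr, hcm⟩ := hS
  set s := (List.range' 1 63).filter (fun p => decide (p ∈ S)) with hs
  have hmem : ∀ p, p ∈ s ↔ p ∈ S := by
    intro p
    rw [hs, List.mem_filter, List.mem_range'_1, decide_eq_true_eq]
    constructor
    · exact fun h => h.2
    · intro h
      have := hr p h
      exact ⟨by omega, h⟩
  have hnd : s.Nodup := (List.nodup_range' (s := 1) (n := 63)).filter _
  have hlen : s.length = 7 := by
    rw [← List.toFinset_card_of_nodup hnd, ← hc]
    congr 1
    ext p
    rw [List.mem_toFinset, hmem]
  have hpw : s.Pairwise (fun p q => commN p q = true) := by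
    rw [List.pairwise_iff_forall_sublist]
    intro a b hab
    exact hcm a ((hmem a).mp (hab.subset (by simp))) b ((hmem b).mp (hab.subset (by simp)))
  have h := goSearch_spec 64 _ 7 0 goSearch_top s List.filter_sublist hpw hlen
  rw [List.mem_map] at h
  obtain ⟨t, ht, hts⟩ := h
  refine ⟨t, ht, ?_⟩
  ext p
  rw [mem_Lset, hts, testBit_foldl, hmem]
  simp only [Nat.zero_testBit, Bool.false_eq_true, false_or]
  exact ⟨fun h => h.2, fun h => ⟨(hr p h).2, h⟩⟩

theorem table_isLag (t : ℕ × ℕ) (ht : t ∈ lagTable) : IsLag (Lset t.2) ∧ t.2 < 2 ^ 64 := by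
  have h := List.all_eq_true.mp table_lag t ht
  simp only [Bool.and_eq_true, beq_iff_eq, Bool.not_eq_true', List.all_eq_true] at h
  obtain ⟨⟨⟨h1, h2⟩, h3⟩, h4⟩ := h
  have hm : ∀ p, p ∈ pts t.2 ↔ p ∈ Lset t.2 := by
    intro p
    rw [mem_Lset, pts, List.mem_filter, List.mem_range]
  refine ⟨⟨?_, ?_, ?_⟩, Nat.le_of_ble_eq_true h3⟩
  · have hnd : (pts t.2).Nodup := List.nodup_range.filter _
    rw [← h1, ← List.toFinset_card_of_nodup hnd]
    congr 1
    ext p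
    rw [List.mem_toFinset, hm]
  · intro p hp
    rw [mem_Lset] at hp
    refine ⟨Nat.pos_of_ne_zero ?_, hp.1⟩
    rintro rfl
    rw [h2] at hp
    exact absurd hp.2 (by simp)
  · intro p hp q hq
    exact h4 p ((hm p).mpr hp) q ((hm q).mpr hq)

theorem mask_ext {m m' : ℕ} (h : m < 2 ^ 64) (h' : m' < 2 ^ 64) (he : Lset m = Lset m') :
    m = m' := by
  apply Nat.eq_of_testBit_eq
  intro i
  by_cases hi : i < 64
  · have := Finset.ext_iff.mp he i
    rw [mem_Lset, mem_Lset] at this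
    simp only [hi, true_and] at this
    exact Bool.eq_iff_iff.mpr this
  · have h1 : 2 ^ 64 ≤ 2 ^ i := Nat.pow_le_pow_right (by norm_num) (by omega)
    rw [Nat.testBit_lt_two_pow (by omega), Nat.testBit_lt_two_pow (by omega)]

theorem table_disjoint (s t : ℕ × ℕ) (hs : s ∈ lagTable) (ht : t ∈ lagTable) :
    Disjoint (Lset s.2) (Lset t.2) ↔ Bn s.1 t.1 = true := by
  have h := List.all_eq_true.mp (List.all_eq_true.mp table_disj s hs) t ht
  rw [beq_iff_eq] at h
  rw [← h, beq_iff_eq]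
  have hs2 := (table_isLag s hs).2
  rw [Finset.disjoint_left]
  constructor
  · intro hd
    apply Nat.eq_of_testBit_eq
    intro i
    change (s.2 &&& t.2).testBit i = _
    rw [Nat.testBit_and, Nat.zero_testBit]
    by_contra hne
    rw [Bool.not_eq_false, Bool.and_eq_true] at hne
    have hi : i < 64 := by
      by_contra hi
      have h1 : 2 ^ 64 ≤ 2 ^ i := Nat.pow_le_pow_right (by norm_num) (by omega)
      rw [Nat.testBit_lt_two_pow (by omega)] at hne
      simp at hne
    exact hd ((mem_Lset _ _).mpr ⟨hi, hne.1⟩) ((mem_Lset _ _).mpr ⟨hi, hne.2⟩)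
  · intro h0 i hi hi'
    rw [mem_Lset] at hi hi'
    have : (s.2 &&& t.2).testBit i = true := by rw [Nat.testBit_and, hi.2, hi'.2]; rfl
    change (Nat.land s.2 t.2).testBit i = true at this
    rw [h0] at this
    simp at this

theorem table_lag_inj (s t : ℕ × ℕ) (hs : s ∈ lagTable) (ht : t ∈ lagTable)
    (h : Lset s.2 = Lset t.2) : s = t :=
  List.inj_on_of_nodup_map table_snd hs ht
    (mask_ext (table_isLag s hs).2 (table_isLag t ht).2 h)

theorem table_byte_inj (s t : ℕ × ℕ) (hs : s ∈ lagTable) (ht : t ∈ lagTable)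
    (h : s.1 = t.1) : s = t :=
  List.inj_on_of_nodup_map table_fst hs ht h

/-! ### Counting in the hyperbolic quadratic space `F₂⁸` -/

/-- The vector space `F₂⁸`. -/
abbrev V8 := Fin 8 → ZMod 2

/-- The quadratic form. -/
def Qv (v : V8) : ZMod 2 := v 0 * v 1 + (v 2 * v 3 + (v 4 * v 5 + v 6 * v 7))

/-- Its polar form. -/
def Bv (v w : V8) : ZMod 2 :=
  v 0 * w 1 + (v 1 * w 0 + (v 2 * w 3 + (v 3 * w 2 + (v 4 * w 5 + (v 5 * w 4 +
    (v 6 * w 7 + v 7 * w 6))))))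

/-- The sign character. -/
def chi (a : ZMod 2) : ℤ := if a = 0 then 1 else -1

theorem chi_add : ∀ a b : ZMod 2, chi (a + b) = chi a * chi b := by decide

theorem chi_sq : ∀ a : ZMod 2, chi a * chi a = 1 := by decide

theorem Qv_add (v w : V8) : Qv (v + w) = Qv v + Qv w + Bv v w := by
  simp only [Qv, Bv, Pi.add_apply]; ring

theorem Bv_add_left (u v w : V8) : Bv (u + v) w = Bv u w + Bv v w := by
  simp only [Bv, Pi.add_apply]; ring

theorem Bv_add_right (u v w : V8) : Bv u (v + w) = Bv u v + Bv u w := by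
  simp only [Bv, Pi.add_apply]; ring

theorem Bv_comm (v w : V8) : Bv v w = Bv w v := by
  simp only [Bv]; ring

theorem Bv_self (v : V8) : Bv v v = 0 := by
  have h2 : (2 : ZMod 2) = 0 := by decide
  simp only [Bv]; ring_nf; simp [h2]

theorem sum_chi_Q0 : ∑ v : V8, chi (Qv v) = 16 := by
  decide +kernel

theorem sum_chi_Q (x : V8) : ∑ v : V8, chi (Qv v) * chi (Bv v x) = 16 * chi (Qv x) := by
  have h : ∀ v : V8, chi (Qv v) * chi (Bv v x) = chi (Qv (v + x)) * chi (Qv x) := by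
    intro v
    rw [Qv_add, chi_add, chi_add]
    linear_combination (-chi (Qv v) * chi (Bv v x)) * chi_sq (Qv x)
  rw [Finset.sum_congr rfl (fun v _ => h v), ← Finset.sum_mul]
  have h2 := Equiv.sum_comp (Equiv.addRight x) (fun v => chi (Qv v))
  simp only [Equiv.coe_addRight] at h2
  rw [h2, sum_chi_Q0]

theorem sum_chi_B (x y : V8) (hxy : Bv x y = 1) : ∑ v : V8, chi (Bv v y) = 0 := by
  have h := Equiv.sum_comp (Equiv.addRight x) (fun v => chi (Bv v y))
  have h2 : ∀ v : V8, chi (Bv (Equiv.addRight x v) y) = - chi (Bv v y) := by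
    intro v
    rw [Equiv.coe_addRight, Bv_add_left, chi_add, hxy]
    have : chi 1 = -1 := by decide
    rw [this]; ring
  rw [Finset.sum_congr rfl (fun v _ => h2 v), Finset.sum_neg_distrib] at h
  linarith

/-- The singular vectors not orthogonal to each of `a, b, c, d`. -/
def Sol (a b c d : V8) : Finset V8 :=
  Finset.univ.filter fun v => Qv v = 0 ∧ Bv v a = 1 ∧ Bv v b = 1 ∧ Bv v c = 1 ∧ Bv v d = 1

theorem sol_ind : ∀ q a b c d : ZMod 2,
    32 * (if q = 0 ∧ a = 1 ∧ b = 1 ∧ c = 1 ∧ d = 1 then (1 : ℤ) else 0) =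
      (1 + chi q) * ((1 - chi a) * (1 - chi b) * (1 - chi c) * (1 - chi d)) := by
  decide

theorem card_sol (a b c d : V8) (qa : Qv a = 0) (qb : Qv b = 0) (qc : Qv c = 0) (qd : Qv d = 0)
    (ab : Bv a b = 1) (ac : Bv a c = 1) (ad : Bv a d = 1) (bc : Bv b c = 1) (bd : Bv b d = 1)
    (cd : Bv c d = 1) : (Sol a b c d).card = 6 := by
  have ba := (Bv_comm b a).trans ab
  have ca := (Bv_comm c a).trans ac
  have da := (Bv_comm d a).trans ad
  have cb := (Bv_comm c b).trans bc
  have db := (Bv_comm d b).trans bd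
  have dc := (Bv_comm d c).trans cd
  have h1 : (32 : ℤ) * ((Sol a b c d).card : ℤ) = 192 := by
    have hE : ∀ v : V8,
        32 * (if Qv v = 0 ∧ Bv v a = 1 ∧ Bv v b = 1 ∧ Bv v c = 1 ∧ Bv v d = 1 then (1 : ℤ) else 0) =
        (1 + chi (Qv v)) * (1 - chi (Bv v a) - chi (Bv v b) - chi (Bv v c) - chi (Bv v d)
          + chi (Bv v (a + b)) + chi (Bv v (a + c)) + chi (Bv v (a + d)) + chi (Bv v (b + c))
          + chi (Bv v (b + d)) + chi (Bv v (c + d))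
          - chi (Bv v (a + b + c)) - chi (Bv v (a + b + d)) - chi (Bv v (a + c + d))
          - chi (Bv v (b + c + d)) + chi (Bv v (a + b + c + d))) := by
      intro v
      rw [sol_ind]
      simp only [Bv_add_right, chi_add]
      ring
    rw [Sol, Finset.card_filter, Nat.cast_sum, Finset.mul_sum]
    push_cast
    rw [Finset.sum_congr rfl (fun v _ => hE v)]
    simp only [add_mul, one_mul, mul_add, mul_sub, mul_one, Finset.sum_add_distrib,
      Finset.sum_sub_distrib]
    simp only [sum_chi_Q, sum_chi_Q0]
    have two : (1 : ZMod 2) + 1 = 0 := by decide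
    have c0 : chi 0 = 1 := by decide
    have c1 : chi 1 = -1 := by decide
    rw [sum_chi_B b a ba, sum_chi_B a b ab, sum_chi_B a c ac, sum_chi_B a d ad,
      sum_chi_B a (a + b) (by rw [Bv_add_right, Bv_self, ab]; rfl),
      sum_chi_B a (a + c) (by rw [Bv_add_right, Bv_self, ac]; rfl),
      sum_chi_B a (a + d) (by rw [Bv_add_right, Bv_self, ad]; rfl),
      sum_chi_B b (b + c) (by rw [Bv_add_right, Bv_self, bc]; rfl),
      sum_chi_B b (b + d) (by rw [Bv_add_right, Bv_self, bd]; rfl),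
      sum_chi_B c (c + d) (by rw [Bv_add_right, Bv_self, cd]; rfl),
      sum_chi_B d (a + b + c) (by rw [Bv_add_right, Bv_add_right, da, db, dc]; rfl),
      sum_chi_B c (a + b + d) (by rw [Bv_add_right, Bv_add_right, ca, cb, cd]; rfl),
      sum_chi_B b (a + c + d) (by rw [Bv_add_right, Bv_add_right, ba, bc, bd]; rfl),
      sum_chi_B a (b + c + d) (by rw [Bv_add_right, Bv_add_right, ab, ac, ad]; rfl),
      sum_chi_B a (a + b + c + d)
        (by rw [Bv_add_right, Bv_add_right, Bv_add_right, Bv_self, ab, ac, ad]; rfl)]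
    simp only [Qv_add, Bv_add_left, qa, qb, qc, qd, ab, ac, ad, bc, bd, cd, two, c0, c1, zero_add,
      add_zero]
    simp [Finset.card_univ, ZMod.card]
  omega

/-! ### From bytes to vectors -/

/-- Bits as elements of `F₂`. -/
def bitZ (b : Bool) : ZMod 2 := if b then 1 else 0

theorem bitZ_xor : ∀ a b : Bool, bitZ (xor a b) = bitZ a + bitZ b := by decide

theorem bitZ_and : ∀ a b : Bool, bitZ (a && b) = bitZ a * bitZ b := by decide

theorem bitZ_eq_one : ∀ a : Bool, bitZ a = 1 ↔ a = true := by decide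

theorem bitZ_eq_zero : ∀ a : Bool, bitZ a = 0 ↔ a = false := by decide

theorem bitZ_inj : ∀ a b : Bool, bitZ a = bitZ b → a = b := by decide

/-- The vector of a byte. -/
def decV (n : ℕ) : V8 := fun i => bitZ (n.testBit i.val)

theorem Bv_dec (x y : ℕ) : Bv (decV x) (decV y) = bitZ (Bn x y) := by
  simp only [Bn, bitZ_xor, bitZ_and]; rfl

theorem Qv_dec (x : ℕ) : Qv (decV x) = bitZ (Qn x) := by
  simp only [Qn, bitZ_xor, bitZ_and]; rfl

theorem dec_inj {x y : ℕ} (hx : x < 256) (hy : y < 256) (h : decV x = decV y) : x = y := by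
  apply Nat.eq_of_testBit_eq
  intro i
  by_cases hi : i < 8
  · exact bitZ_inj _ _ (congrFun h ⟨i, hi⟩)
  · have h1 : 2 ^ 8 ≤ 2 ^ i := Nat.pow_le_pow_right (by norm_num) (by omega)
    rw [Nat.testBit_lt_two_pow (by omega), Nat.testBit_lt_two_pow (by omega)]

theorem dec_surj (v : V8) : ∃ n < 256, decV n = v := by
  have hinj : Function.Injective (fun n : Fin 256 => decV n.val) := by
    intro x y h
    exact Fin.ext (dec_inj x.isLt y.isLt h)
  have hbij := (Fintype.bijective_iff_injective_and_card (fun n : Fin 256 => decV n.val)).mpr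
    ⟨hinj, by simp [ZMod.card]⟩
  obtain ⟨n, hn⟩ := hbij.2 v
  exact ⟨n.val, n.isLt, hn⟩

theorem table_byte (t : ℕ × ℕ) (ht : t ∈ lagTable) : t.1 < 256 ∧ Qv (decV t.1) = 0 := by
  have h := List.all_eq_true.mp table_sing t ht
  rw [Bool.and_eq_true] at h
  refine ⟨Nat.le_of_ble_eq_true h.1, ?_⟩
  rw [Qv_dec, bitZ_eq_zero]
  simpa using h.2

theorem table_surj (v : V8) (hv : v ≠ 0) (hq : Qv v = 0) : ∃ t ∈ lagTable, decV t.1 = v := by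
  obtain ⟨n, hn, rfl⟩ := dec_surj v
  have h := List.all_eq_true.mp table_all n (List.mem_range.mpr hn)
  rw [Qv_dec, bitZ_eq_zero] at hq
  rw [hq, Bool.or_false, Bool.or_eq_true, beq_iff_eq] at h
  rcases h with rfl | h
  · exact absurd (by funext i; simp [decV, bitZ]) hv
  · obtain ⟨t, ht, rfl⟩ := List.mem_map.mp (List.elem_iff.mp h)
    exact ⟨t, ht, rfl⟩

/-- Exactly six Lagrangians are disjoint from four given pairwise disjoint ones. -/
theorem six_lag (A B C D : Finset ℕ) (hA : IsLag A) (hB : IsLag B) (hC : IsLag C) (hD : IsLag D)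
    (ab : Disjoint A B) (ac : Disjoint A C) (ad : Disjoint A D) (bc : Disjoint B C)
    (bd : Disjoint B D) (cd : Disjoint C D) :
    ∃ N : Finset (Finset ℕ), N.card = 6 ∧ ∀ S, S ∈ N ↔
      IsLag S ∧ Disjoint S A ∧ Disjoint S B ∧ Disjoint S C ∧ Disjoint S D := by
  obtain ⟨a, ha, rfl⟩ := lag_in_table A hA
  obtain ⟨b, hb, rfl⟩ := lag_in_table B hB
  obtain ⟨c, hc, rfl⟩ := lag_in_table C hC
  obtain ⟨d, hd, rfl⟩ := lag_in_table D hD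
  have key : ∀ s t : ℕ × ℕ, s ∈ lagTable → t ∈ lagTable →
      (Disjoint (Lset s.2) (Lset t.2) ↔ Bv (decV s.1) (decV t.1) = 1) := by
    intro s t hs ht
    rw [table_disjoint s t hs ht, Bv_dec, bitZ_eq_one]
  have h6 := card_sol (decV a.1) (decV b.1) (decV c.1) (decV d.1)
    (table_byte a ha).2 (table_byte b hb).2 (table_byte c hc).2 (table_byte d hd).2
    ((key a b ha hb).mp ab) ((key a c ha hc).mp ac) ((key a d ha hd).mp ad)
    ((key b c hb hc).mp bc) ((key b d hb hd).mp bd) ((key c d hc hd).mp cd)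
  set K : Finset (ℕ × ℕ) := lagTable.toFinset.filter
    (fun t => decV t.1 ∈ Sol (decV a.1) (decV b.1) (decV c.1) (decV d.1)) with hK
  have hKm : ∀ t, t ∈ K ↔ t ∈ lagTable ∧ decV t.1 ∈ Sol (decV a.1) (decV b.1) (decV c.1) (decV d.1) := by
    intro t
    rw [hK, Finset.mem_filter, List.mem_toFinset]
  have hK1 : K.image (fun t => decV t.1) = Sol (decV a.1) (decV b.1) (decV c.1) (decV d.1) := by
    ext v
    rw [Finset.mem_image]
    constructor
    · rintro ⟨t, ht, rfl⟩
      exact ((hKm t).mp ht).2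
    · intro hv
      have hv' := hv
      rw [Sol, Finset.mem_filter] at hv'
      have hne : v ≠ 0 := by
        rintro rfl
        have := hv'.2.2.1
        simp [Bv] at this
      obtain ⟨t, ht, rfl⟩ := table_surj v hne hv'.2.1
      exact ⟨t, (hKm t).mpr ⟨ht, hv⟩, rfl⟩
  have hK2 : K.card = 6 := by
    rw [← h6, ← hK1, Finset.card_image_of_injOn]
    intro s hs t ht h
    have hs' := ((hKm s).mp hs).1
    have ht' := ((hKm t).mp ht).1
    exact table_byte_inj s t hs' ht' (dec_inj (table_byte s hs').1 (table_byte t ht').1 h)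
  refine ⟨K.image (fun t => Lset t.2), ?_, ?_⟩
  · rw [Finset.card_image_of_injOn, hK2]
    intro s hs t ht h
    exact table_lag_inj s t ((hKm s).mp hs).1 ((hKm t).mp ht).1 h
  · intro S
    rw [Finset.mem_image]
    constructor
    · rintro ⟨t, ht, rfl⟩
      obtain ⟨ht, hs⟩ := (hKm t).mp ht
      rw [Sol, Finset.mem_filter] at hs
      rw [key t a ht ha, key t b ht hb, key t c ht hc, key t d ht hd]
      exact ⟨(table_isLag t ht).1, hs.2.2⟩
    · rintro ⟨hS, h⟩
      obtain ⟨t, ht, rfl⟩ := lag_in_table S hS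
      rw [key t a ht ha, key t b ht hb, key t c ht hc, key t d ht hd] at h
      refine ⟨t, (hKm t).mpr ⟨ht, ?_⟩, rfl⟩
      rw [Sol, Finset.mem_filter]
      exact ⟨Finset.mem_univ _, (table_byte t ht).2, h⟩

/-- The combinatorial form of the theorem. -/
theorem unique_lag (D : Fin 9 → Finset ℕ) (hD : ∀ i, IsLag (D i))
    (hdis : ∀ i j, i ≠ j → Disjoint (D i) (D j)) :
    ∃ S, (IsLag S ∧ (∀ p ∈ S, ∃ i : Fin 9, i.val < 5 ∧ p ∈ D i) ∧
        ∀ i : Fin 9, i.val < 5 → S ≠ D i) ∧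
      ∀ S', (IsLag S' ∧ (∀ p ∈ S', ∃ i : Fin 9, i.val < 5 ∧ p ∈ D i) ∧
        ∀ i : Fin 9, i.val < 5 → S' ≠ D i) → S' = S := by
  have hcover : ∀ p, 0 < p → p < 64 → ∃ i, p ∈ D i := by
    have hU : Finset.univ.biUnion D = Finset.Ico 1 64 := by
      apply Finset.eq_of_subset_of_card_le
      · intro p hp
        rw [Finset.mem_biUnion] at hp
        obtain ⟨i, -, hi⟩ := hp
        have := (hD i).2.1 p hi
        rw [Finset.mem_Ico]
        omega
      · rw [Finset.card_biUnion (fun i _ j _ hij => hdis i j hij),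
          Finset.sum_congr rfl (fun i _ => (hD i).1)]
        simp
    intro p h0 h1
    have : p ∈ Finset.univ.biUnion D := by
      rw [hU, Finset.mem_Ico]; omega
    rw [Finset.mem_biUnion] at this
    obtain ⟨i, -, hi⟩ := this
    exact ⟨i, hi⟩
  obtain ⟨N, hN6, hN⟩ := six_lag (D 5) (D 6) (D 7) (D 8) (hD 5) (hD 6) (hD 7) (hD 8)
    (hdis _ _ (by decide)) (hdis _ _ (by decide)) (hdis _ _ (by decide)) (hdis _ _ (by decide))
    (hdis _ _ (by decide)) (hdis _ _ (by decide))
  have hNiff : ∀ S, IsLag S → ((∀ p ∈ S, ∃ i : Fin 9, i.val < 5 ∧ p ∈ D i) ↔ S ∈ N) := by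
    intro S hS
    rw [hN]
    constructor
    · intro h
      have hd : ∀ j : Fin 9, 5 ≤ j.val → Disjoint S (D j) := by
        intro j hj
        rw [Finset.disjoint_left]
        intro p hp hpj
        obtain ⟨i, hi, hpi⟩ := h p hp
        exact Finset.disjoint_left.mp (hdis i j (by rintro rfl; omega)) hpi hpj
      exact ⟨hS, hd 5 (by decide), hd 6 (by decide), hd 7 (by decide), hd 8 (by decide)⟩
    · rintro ⟨-, h5, h6, h7, h8⟩ p hp
      obtain ⟨i, hi⟩ := hcover p (hS.2.1 p hp).1 (hS.2.1 p hp).2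
      refine ⟨i, ?_, hi⟩
      by_contra hlt
      have : i = 5 ∨ i = 6 ∨ i = 7 ∨ i = 8 := by omega
      rcases this with rfl | rfl | rfl | rfl
      · exact Finset.disjoint_left.mp h5 hp hi
      · exact Finset.disjoint_left.mp h6 hp hi
      · exact Finset.disjoint_left.mp h7 hp hi
      · exact Finset.disjoint_left.mp h8 hp hi
  have hDinj : Function.Injective D := by
    intro i j hij
    by_contra hne
    have h := hdis i j hne
    rw [hij, disjoint_self] at h
    have h7 := (hD j).1
    rw [h] at h7
    simp at h7
  set M : Finset (Finset ℕ) := (Finset.univ.filter (fun i : Fin 9 => i.val < 5)).image D with hM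
  have hMc : M.card = 5 := by
    rw [hM, Finset.card_image_of_injective _ hDinj]
    decide
  have hMm : ∀ S, S ∉ M ↔ ∀ i : Fin 9, i.val < 5 → S ≠ D i := by
    intro S
    rw [hM]
    simp only [Finset.mem_image, Finset.mem_filter, Finset.mem_univ, true_and, not_exists, not_and]
    exact ⟨fun h i hi he => h i hi he.symm, fun h i hi he => h i hi he.symm⟩
  have hMN : M ⊆ N := by
    intro S hS
    rw [hM, Finset.mem_image] at hS
    obtain ⟨i, hi, rfl⟩ := hS
    rw [Finset.mem_filter] at hi
    exact (hNiff _ (hD i)).mp (fun p hp => ⟨i, hi.2, hp⟩)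
  have h1 : (N \ M).card = 1 := by
    rw [Finset.card_sdiff_of_subset hMN, hN6, hMc]
  obtain ⟨S, hS⟩ := Finset.card_eq_one.mp h1
  have hchar : ∀ S', (IsLag S' ∧ (∀ p ∈ S', ∃ i : Fin 9, i.val < 5 ∧ p ∈ D i) ∧
        ∀ i : Fin 9, i.val < 5 → S' ≠ D i) ↔ S' = S := by
    intro S'
    rw [← Finset.mem_singleton, ← hS, Finset.mem_sdiff, hMm]
    constructor
    · rintro ⟨h1, h2, h3⟩
      exact ⟨(hNiff S' h1).mp h2, h3⟩
    · rintro ⟨h1, h2⟩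
      have h3 := ((hN S').mp h1).1
      exact ⟨h3, (hNiff S' h3).mpr h1, h2⟩
  exact ⟨S, (hchar S).mpr rfl, fun S' h => (hchar S').mp h⟩

/-! ### Pauli operators and their labels -/

/-- Single-qubit Pauli matrix of a label. -/
def pm : ℕ → Matrix (Fin 2) (Fin 2) ℂ
  | 0 => pI
  | 1 => pX
  | 2 => pY
  | _ => pZ

/-- Digits of a label. -/
def dig (a : ℕ) (j : Fin 3) : ℕ := a / 4 ^ j.val % 4

/-- Three-qubit Pauli operator of a label. -/
def pauliOp (a : ℕ) : QMat 3 := kron 3 fun j => pm (dig a j)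

theorem kron_mul (W W' : Fin 3 → Matrix (Fin 2) (Fin 2) ℂ) :
    kron 3 W * kron 3 W' = kron 3 fun j => W j * W' j := by
  ext v w
  simp only [Matrix.mul_apply, kron]
  rw [Finset.prod_univ_sum]
  simp only [Fintype.piFinset_univ, Finset.prod_mul_distrib]

theorem kron_smul (c : Fin 3 → ℂ) (W : Fin 3 → Matrix (Fin 2) (Fin 2) ℂ) :
    (kron 3 fun j => c j • W j) = (∏ j, c j) • kron 3 W := by
  ext v w
  simp only [kron, Matrix.smul_apply, smul_eq_mul, Finset.prod_mul_distrib]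

theorem kron_one : (kron 3 fun _ => (1 : Matrix (Fin 2) (Fin 2) ℂ)) = 1 := by
  ext v w
  simp only [kron, Matrix.one_apply]
  by_cases h : v = w
  · subst h; simp
  · rw [if_neg h]
    obtain ⟨j, hj⟩ := Function.ne_iff.mp h
    exact Finset.prod_eq_zero (Finset.mem_univ j) (if_neg hj)

/-- Commutation sign. -/
def sgn1 (a b : ℕ) : ℂ := if comm1 a b then 1 else -1

theorem pm_comm (a b : ℕ) (ha : a < 4) (hb : b < 4) : pm a * pm b = sgn1 a b • (pm b * pm a) := by
  interval_cases a <;> interval_cases b <;> ext i j <;> fin_cases i <;> fin_cases j <;>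
    simp [pm, pI, pX, pY, pZ, sgn1, comm1, Matrix.mul_apply, Fin.sum_univ_two]

theorem pm_sq (a : ℕ) (ha : a < 4) : pm a * pm a = 1 := by
  interval_cases a <;> ext i j <;> fin_cases i <;> fin_cases j <;>
    simp [pm, pI, pX, pY, pZ, Matrix.mul_apply, Fin.sum_univ_two]

theorem dig_lt (a : ℕ) (j : Fin 3) : dig a j < 4 := Nat.mod_lt _ (by norm_num)

theorem pauliOp_sq (a : ℕ) : pauliOp a * pauliOp a = 1 := by
  rw [pauliOp, kron_mul, ← kron_one]
  congr 1
  funext j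
  exact pm_sq _ (dig_lt a j)

theorem sign_xor (x y z : Bool) : (if xor x (xor y z) then (1 : ℂ) else -1) =
    (if x then (1 : ℂ) else -1) * (if y then (1 : ℂ) else -1) * (if z then (1 : ℂ) else -1) := by
  cases x <;> cases y <;> cases z <;> norm_num

theorem pauliOp_swap (a b : ℕ) :
    pauliOp a * pauliOp b = (if commN a b then (1 : ℂ) else -1) • (pauliOp b * pauliOp a) := by
  have h : (if commN a b then (1 : ℂ) else -1) = ∏ j, sgn1 (dig a j) (dig b j) := by
    rw [Fin.prod_univ_three]
    simp only [commN, sgn1, dig, Fin.val_zero, Fin.val_one, Fin.val_two, pow_zero, pow_one,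
      Nat.div_one, show 4 ^ 2 = 16 from rfl]
    exact sign_xor _ _ _
  rw [h, pauliOp, pauliOp, kron_mul, kron_mul, ← kron_smul]
  congr 1
  funext j
  exact pm_comm _ _ (dig_lt a j) (dig_lt b j)

theorem pauliOp_mul_ne (a b : ℕ) : pauliOp a * pauliOp b ≠ 0 := by
  intro h
  have h1 : pauliOp a * (pauliOp a * pauliOp b) * pauliOp b = 1 := by
    rw [← mul_assoc, pauliOp_sq, one_mul, pauliOp_sq]
  rw [h, mul_zero, zero_mul] at h1
  exact zero_ne_one h1

theorem neg_sign_ne (M : QMat 3) (hM : M ≠ 0) : M ≠ (-1 : ℂ) • M := by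
  intro h
  apply hM
  have h2 : (2 : ℂ) • M = 0 := by
    rw [two_smul]
    nth_rewrite 2 [h]
    rw [neg_smul, one_smul, add_neg_cancel]
  exact (smul_eq_zero.mp h2).resolve_left two_ne_zero

theorem pauliOp_comm_iff (a b : ℕ) :
    pauliOp a * pauliOp b = pauliOp b * pauliOp a ↔ commN a b = true := by
  have h := pauliOp_swap a b
  constructor
  · intro hc
    by_contra hn
    rw [if_neg hn, hc] at h
    exact neg_sign_ne _ (pauliOp_mul_ne b a) h
  · intro hc
    rw [if_pos hc, one_smul] at h
    exact h

theorem comm_separates : ((List.range 64).all fun a => (List.range 64).all fun b =>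
    a == b || !([1, 3, 4, 12, 16, 48].all fun k => commN a k == commN b k)) = true := by
  decide +kernel

theorem pauliOp_phase {a b : ℕ} (ha : a < 64) (hb : b < 64)
    (h : PhaseEq (pauliOp a) (pauliOp b)) : a = b := by
  obtain ⟨c, hc, h⟩ := h
  have hk : ∀ k, commN a k = commN b k := by
    intro k
    rw [Bool.eq_iff_iff, ← pauliOp_comm_iff, ← pauliOp_comm_iff, h, smul_mul_assoc, mul_smul_comm]
    exact ⟨fun h => smul_right_injective _ hc h, fun h => by rw [h]⟩
  have h1 := List.all_eq_true.mp (List.all_eq_true.mp comm_separates a (List.mem_range.mpr ha)) b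
    (List.mem_range.mpr hb)
  simpa [hk] using h1

theorem phase_refl (M : QMat 3) : PhaseEq M M := ⟨1, one_ne_zero, (one_smul _ _).symm⟩

theorem pauliOp_inj {a b : ℕ} (ha : a < 64) (hb : b < 64) (h : pauliOp a = pauliOp b) : a = b :=
  pauliOp_phase ha hb (h ▸ phase_refl _)

theorem pauliOp_zero : pauliOp 0 = 1 := by
  rw [pauliOp, ← kron_one]
  congr 1
  funext j
  simp [dig, pm, pI]

theorem isPauli_iff (M : QMat 3) : IsPauliOp 3 M ↔ ∃ a < 64, M = pauliOp a := by
  constructor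
  · rintro ⟨W, hW, rfl⟩
    have hd : ∀ j, ∃ d < 4, W j = pm d := by
      intro j
      rcases hW j with h | h | h | h
      · exact ⟨0, by norm_num, h⟩
      · exact ⟨1, by norm_num, h⟩
      · exact ⟨2, by norm_num, h⟩
      · exact ⟨3, by norm_num, h⟩
    choose d hd4 hd using hd
    have h0 := hd4 0
    have h1 := hd4 1
    have h2 := hd4 2
    refine ⟨d 0 + 4 * d 1 + 16 * d 2, by omega, ?_⟩
    rw [pauliOp]
    congr 1
    funext j
    rw [hd j]
    congr 1
    fin_cases j
    · simp only [dig, Fin.zero_eta, pow_zero]; omega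
    · simp only [dig, Fin.mk_one, pow_one]; omega
    · simp only [dig, Fin.reduceFinMk]; omega
  · rintro ⟨a, -, rfl⟩
    refine ⟨_, fun j => ?_, rfl⟩
    have := dig_lt a j
    generalize dig a j = d at this
    interval_cases d <;> simp [pm]

open Classical in
/-- The labels of a class. -/
def labels (C : Set (QMat 3)) : Finset ℕ := (Finset.range 64).filter fun a => pauliOp a ∈ C

theorem mem_labels (C : Set (QMat 3)) (a : ℕ) : a ∈ labels C ↔ a < 64 ∧ pauliOp a ∈ C := by
  simp [labels]

/-- The class of a set of labels. -/
def classOf (S : Finset ℕ) : Set (QMat 3) := pauliOp '' (S : Set ℕ)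

theorem injOn_class (S : Finset ℕ) (hS : ∀ p ∈ S, p < 64) : Set.InjOn pauliOp (S : Set ℕ) :=
  fun a ha b hb h => pauliOp_inj (hS a ha) (hS b hb) h

theorem class_of_labels (C : Set (QMat 3)) (hC : IsMaxClass 3 C) : C = classOf (labels C) := by
  ext M
  constructor
  · intro hM
    obtain ⟨a, ha, rfl⟩ := (isPauli_iff M).mp (hC.2.2.1 M hM).1
    exact ⟨a, (mem_labels C a).mpr ⟨ha, hM⟩, rfl⟩
  · rintro ⟨a, ha, rfl⟩
    exact ((mem_labels C a).mp ha).2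

theorem labels_isLag (C : Set (QMat 3)) (hC : IsMaxClass 3 C) : IsLag (labels C) := by
  refine ⟨?_, ?_, ?_⟩
  · have h := hC.2.1
    rw [class_of_labels C hC, classOf, Set.ncard_image_of_injOn
      (injOn_class _ fun p hp => ((mem_labels C p).mp hp).1), Set.ncard_coe_finset] at h
    simpa using h
  · intro p hp
    rw [mem_labels] at hp
    refine ⟨Nat.pos_of_ne_zero ?_, hp.1⟩
    rintro rfl
    exact (hC.2.2.1 _ hp.2).2 pauliOp_zero
  · intro p hp q hq
    rw [mem_labels] at hp hq
    exact (pauliOp_comm_iff p q).mp (hC.2.2.2.1 _ hp.2 _ hq.2)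

theorem classOf_max (S : Finset ℕ) (hS : IsLag S) : IsMaxClass 3 (classOf S) := by
  have hlt : ∀ p ∈ S, p < 64 := fun p hp => (hS.2.1 p hp).2
  refine ⟨S.finite_toSet.image _, ?_, ?_, ?_, ?_⟩
  · rw [classOf, Set.ncard_image_of_injOn (injOn_class S hlt), Set.ncard_coe_finset, hS.1]
    rfl
  · rintro _ ⟨a, ha, rfl⟩
    refine ⟨(isPauli_iff _).mpr ⟨a, hlt a ha, rfl⟩, ?_⟩
    rw [← pauliOp_zero]
    intro h
    have h1 := pauliOp_inj (hlt a ha) (by norm_num) h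
    have h2 := (hS.2.1 a ha).1
    omega
  · rintro _ ⟨a, ha, rfl⟩ _ ⟨b, hb, rfl⟩
    exact (pauliOp_comm_iff a b).mpr (hS.2.2 a ha b hb)
  · rintro _ ⟨a, ha, rfl⟩ _ ⟨b, hb, rfl⟩ hne hp
    exact hne (by rw [pauliOp_phase (hlt a ha) (hlt b hb) hp])

theorem classPhaseEq_iff (C D : Set (QMat 3)) (hC : IsMaxClass 3 C) (hD : IsMaxClass 3 D) :
    ClassPhaseEq C D ↔ labels C = labels D := by
  constructor
  · rintro ⟨h1, h2⟩
    ext p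
    rw [mem_labels, mem_labels]
    constructor
    · rintro ⟨hp, hpC⟩
      obtain ⟨V, hV, hph⟩ := h1 _ hpC
      obtain ⟨b, hb, rfl⟩ := (isPauli_iff V).mp (hD.2.2.1 V hV).1
      rw [pauliOp_phase hp hb hph]
      exact ⟨hb, hV⟩
    · rintro ⟨hp, hpD⟩
      obtain ⟨V, hV, hph⟩ := h2 _ hpD
      obtain ⟨b, hb, rfl⟩ := (isPauli_iff V).mp (hC.2.2.1 V hV).1
      rw [← pauliOp_phase hb hp hph]
      exact ⟨hb, hV⟩
  · intro h
    have : C = D := by rw [class_of_labels C hC, class_of_labels D hD, h]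
    subst this
    exact ⟨fun U hU => ⟨U, hU, phase_refl U⟩, fun U hU => ⟨U, hU, phase_refl U⟩⟩

theorem labels_classOf (S : Finset ℕ) (hS : IsLag S) : labels (classOf S) = S := by
  ext p
  rw [mem_labels]
  constructor
  · rintro ⟨hp, a, ha, h⟩
    rw [← pauliOp_inj (hS.2.1 a ha).2 hp h]
    exact ha
  · intro hp
    exact ⟨(hS.2.1 p hp).2, p, hp, rfl⟩

theorem mem_five (C : Fin 9 → Set (QMat 3)) (V : QMat 3) :
    V ∈ C 0 ∪ C 1 ∪ C 2 ∪ C 3 ∪ C 4 ↔ ∃ i : Fin 9, i.val < 5 ∧ V ∈ C i := by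
  simp only [Set.mem_union]
  constructor
  · rintro ((((h | h) | h) | h) | h)
    · exact ⟨0, by decide, h⟩
    · exact ⟨1, by decide, h⟩
    · exact ⟨2, by decide, h⟩
    · exact ⟨3, by decide, h⟩
    · exact ⟨4, by decide, h⟩
  · rintro ⟨i, hi, h⟩
    have : i = 0 ∨ i = 1 ∨ i = 2 ∨ i = 3 ∨ i = 4 := by omega
    rcases this with rfl | rfl | rfl | rfl | rfl <;> tauto

/-- Given a complete set of nine Pauli classes in dimension `d = 8`,
there is a unique (up to phase) maximal commuting Pauli class `T`, not equal up to
phase to any of `C 0, …, C 4`, all of whose members are equal up to phase to members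
of `C 0 ∪ ⋯ ∪ C 4`. -/
theorem unique_extra_class_d8 (C : Fin 9 → Set (QMat 3))
    (hmax : ∀ i, IsMaxClass 3 (C i))
    (hdisj : ∀ i j, i ≠ j → ClassDisjoint (C i) (C j)) :
    ∃ T : Set (QMat 3),
      (IsMaxClass 3 T ∧
        (∀ U ∈ T, ∃ V ∈ C 0 ∪ C 1 ∪ C 2 ∪ C 3 ∪ C 4, PhaseEq U V) ∧
        (∀ i : Fin 9, i.val < 5 → ¬ ClassPhaseEq T (C i))) ∧
      ∀ T' : Set (QMat 3),
        (IsMaxClass 3 T' ∧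
          (∀ U ∈ T', ∃ V ∈ C 0 ∪ C 1 ∪ C 2 ∪ C 3 ∪ C 4, PhaseEq U V) ∧
          (∀ i : Fin 9, i.val < 5 → ¬ ClassPhaseEq T' (C i))) →
        ClassPhaseEq T T' := by
  have hD := fun i => labels_isLag (C i) (hmax i)
  have hdis : ∀ i j, i ≠ j → Disjoint (labels (C i)) (labels (C j)) := by
    intro i j hij
    rw [Finset.disjoint_left]
    intro p hp hq
    rw [mem_labels] at hp hq
    exact hdisj i j hij _ hp.2 _ hq.2 (phase_refl _)
  have htrans : ∀ T : Set (QMat 3), IsMaxClass 3 T →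
      (((∀ U ∈ T, ∃ V ∈ C 0 ∪ C 1 ∪ C 2 ∪ C 3 ∪ C 4, PhaseEq U V) ∧
        (∀ i : Fin 9, i.val < 5 → ¬ ClassPhaseEq T (C i))) ↔
      ((∀ p ∈ labels T, ∃ i : Fin 9, i.val < 5 ∧ p ∈ labels (C i)) ∧
        ∀ i : Fin 9, i.val < 5 → labels T ≠ labels (C i))) := by
    intro T hT
    refine and_congr ⟨?_, ?_⟩ ?_
    · intro h p hp
      rw [mem_labels] at hp
      obtain ⟨V, hV, hph⟩ := h _ hp.2
      obtain ⟨i, hi, hVi⟩ := (mem_five C V).mp hV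
      obtain ⟨b, hb, rfl⟩ := (isPauli_iff V).mp ((hmax i).2.2.1 V hVi).1
      rw [pauliOp_phase hp.1 hb hph]
      exact ⟨i, hi, (mem_labels _ _).mpr ⟨hb, hVi⟩⟩
    · intro h U hU
      obtain ⟨a, ha, rfl⟩ := (isPauli_iff U).mp (hT.2.2.1 U hU).1
      obtain ⟨i, hi, hai⟩ := h a ((mem_labels _ _).mpr ⟨ha, hU⟩)
      exact ⟨_, (mem_five C _).mpr ⟨i, hi, ((mem_labels _ _).mp hai).2⟩, phase_refl _⟩
    · exact forall_congr' fun i => imp_congr_right fun _ =>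
        not_congr (classPhaseEq_iff T (C i) hT (hmax i))
  obtain ⟨S, ⟨hS, hS1⟩, huniq⟩ := unique_lag (fun i => labels (C i)) hD hdis
  have hTm := classOf_max S hS
  have hTl := labels_classOf S hS
  refine ⟨classOf S, ⟨hTm, (htrans _ hTm).mpr (by rw [hTl]; exact hS1)⟩, ?_⟩
  rintro T' ⟨hT', h'⟩
  rw [classPhaseEq_iff _ _ hTm hT', hTl]
  exact (huniq (labels T') ⟨labels_isLag T' hT', (htrans T' hT').mp h'⟩).symm
end
end

section
/- Let {C₁, C₂, C₃} be an unextendible family of three pairwise disjoint maximal commuting Pauli classes in dimension d = 4. Write C₁ = {U₁, V₁, W₁} and C₂ = {U₂, V₂, W₂}, where W₁ is equal up to phase to U₁V₁ and W₂ is equal up to phase to U₂V₂, labeled so that [U₁, U₂] = 0 and [V₁, V₂] = 0 (such a labeling exists since each element of C₁ commutes with exactly one element of C₂). Then C₃ consists, up to phase, exactly of the three operators U₁U₂, V₁V₂, and U₁V₁U₂V₂. -/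
open Matrix

noncomputable section

/-! ### Encoding two-qubit Pauli operators by numbers below 16 -/

/-- Single-qubit Pauli matrices, coded so that multiplication becomes bitwise xor. -/
def sg (a : ℕ) : Matrix (Fin 2) (Fin 2) ℂ :=
  if a = 0 then pI else if a = 1 then pX else if a = 2 then pZ else pY

/-- Do the single-qubit operators with these codes anticommute? -/
def sy1 (a b : ℕ) : Bool := a != 0 && b != 0 && a != b

/-- Do the two-qubit operators with these codes anticommute? -/
def sy (p q : ℕ) : Bool := sy1 (p / 4) (q / 4) ^^ sy1 (p % 4) (q % 4)

/-- The two-qubit Pauli operator with code `p`. -/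
def PP (p : ℕ) : QMat 2 := kron 2 ![sg (p / 4), sg (p % 4)]

/-- `r, s` span a commuting class that avoids the list `S`. -/
def good (S : List ℕ) (r s : ℕ) : Bool :=
  r != 0 && s != 0 && r != s && !sy r s && !S.contains r && !S.contains s && !S.contains (r ^^^ s)

lemma sg_mul (a b : ℕ) (ha : a < 4) (hb : b < 4) :
    ∃ c : ℂ, c ≠ 0 ∧ sg a * sg b = c • sg (a ^^^ b) := by
  have key : ∀ c : ℂ, c ≠ 0 → sg a * sg b = c • sg (a ^^^ b) →
    ∃ c : ℂ, c ≠ 0 ∧ sg a * sg b = c • sg (a ^^^ b) := fun c h1 h2 => ⟨c, h1, h2⟩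
  interval_cases a <;> interval_cases b <;>
  first
  | (apply key 1 one_ne_zero
     ext i j; fin_cases i <;> fin_cases j <;> simp [sg, pI, pX, pY, pZ]; done)
  | (apply key Complex.I Complex.I_ne_zero
     ext i j; fin_cases i <;> fin_cases j <;> simp [sg, pI, pX, pY, pZ]; done)
  | (apply key (-Complex.I) (neg_ne_zero.2 Complex.I_ne_zero)
     ext i j; fin_cases i <;> fin_cases j <;> simp [sg, pI, pX, pY, pZ]; done)

lemma sg_comm (a b : ℕ) (ha : a < 4) (hb : b < 4) :
    sg a * sg b = (if sy1 a b then (-1 : ℂ) else 1) • (sg b * sg a) := by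
  interval_cases a <;> interval_cases b <;>
  (ext i j; fin_cases i <;> fin_cases j <;> simp [sg, sy1, pI, pX, pY, pZ])

lemma sg_trace (a : ℕ) (ha : a < 4) (h : a ≠ 0) : (sg a).trace = 0 := by
  interval_cases a <;> simp_all [sg, pI, pX, pY, pZ, Matrix.trace]

lemma kron_mul_s18 (A B A' B' : Matrix (Fin 2) (Fin 2) ℂ) :
    kron 2 ![A, B] * kron 2 ![A', B'] = kron 2 ![A * A', B * B'] := by
  ext v w
  have h := Finset.prod_univ_sum (fun _ : Fin 2 => (Finset.univ : Finset (Fin 2)))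
    (fun (j : Fin 2) (k : Fin 2) => (![A, B] j (v j) k) * (![A', B'] j k (w j)))
  rw [Fintype.piFinset_univ] at h
  simp only [Matrix.mul_apply, kron, ← Finset.prod_mul_distrib]
  rw [← h]
  simp [Fin.prod_univ_two, Matrix.mul_apply]

lemma kron_trace (A B : Matrix (Fin 2) (Fin 2) ℂ) :
    (kron 2 ![A, B]).trace = A.trace * B.trace := by
  have h := Finset.prod_univ_sum (fun _ : Fin 2 => (Finset.univ : Finset (Fin 2)))
    (fun (j : Fin 2) (k : Fin 2) => (![A, B] j k k))
  rw [Fintype.piFinset_univ] at h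
  simp only [Matrix.trace, Matrix.diag, kron]
  rw [← h]
  simp [Fin.prod_univ_two]

lemma kron_smul_s18 (c d : ℂ) (A B : Matrix (Fin 2) (Fin 2) ℂ) :
    kron 2 ![c • A, d • B] = (c * d) • kron 2 ![A, B] := by
  ext v w
  simp [kron, Fin.prod_univ_two]
  ring

lemma PP_zero : PP 0 = 1 := by
  ext v w
  simp only [PP, kron, Fin.prod_univ_two, sg, pI, Matrix.one_apply]
  by_cases h : v = w
  · subst h; simp
  · rw [if_neg h]
    have : ¬ (v 0 = w 0 ∧ v 1 = w 1) := fun hh => h (by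
      ext i; fin_cases i
      · exact congrArg Fin.val hh.1
      · exact congrArg Fin.val hh.2)
    by_cases h0 : v 0 = w 0
    · have h1 : v 1 ≠ w 1 := fun h1 => this ⟨h0, h1⟩
      simp [h1]
    · simp [h0]

lemma xor_div (p q : ℕ) (hp : p < 16) (hq : q < 16) :
    (p ^^^ q) / 4 = p / 4 ^^^ q / 4 ∧ (p ^^^ q) % 4 = p % 4 ^^^ q % 4 ∧ p ^^^ q < 16 := by
  have h : ∀ p < 16, ∀ q < 16,
      (p ^^^ q) / 4 = p / 4 ^^^ q / 4 ∧ (p ^^^ q) % 4 = p % 4 ^^^ q % 4 ∧ p ^^^ q < 16 := by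
    decide +kernel
  exact h p hp q hq

lemma PP_mul (p q : ℕ) (hp : p < 16) (hq : q < 16) : PhaseEq (PP p * PP q) (PP (p ^^^ q)) := by
  obtain ⟨c, hc, h1⟩ := sg_mul (p / 4) (q / 4) (by omega) (by omega)
  obtain ⟨d, hd, h2⟩ := sg_mul (p % 4) (q % 4) (by omega) (by omega)
  obtain ⟨e1, e2, -⟩ := xor_div p q hp hq
  refine ⟨c * d, mul_ne_zero hc hd, ?_⟩
  rw [PP, PP, kron_mul_s18, h1, h2, kron_smul_s18, PP, e1, e2]

lemma PP_sq (p : ℕ) (hp : p < 16) : PhaseEq (PP p * PP p) 1 := by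
  have := PP_mul p p hp hp
  rwa [Nat.xor_self, PP_zero] at this

lemma PP_ne_zero (p : ℕ) (hp : p < 16) : PP p ≠ 0 := by
  intro h
  obtain ⟨c, hc, h1⟩ := PP_sq p hp
  rw [h, zero_mul] at h1
  have := congrFun (congrFun h1 0) 0
  simp [hc.symm] at this

lemma PP_comm (p q : ℕ) (hp : p < 16) (hq : q < 16) :
    PP p * PP q = PP q * PP p ↔ sy p q = false := by
  have h : PP p * PP q = (if sy p q then (-1 : ℂ) else 1) • (PP q * PP p) := by
    rw [PP, PP, kron_mul_s18, sg_comm (p / 4) (q / 4) (by omega) (by omega),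
      sg_comm (p % 4) (q % 4) (by omega) (by omega), kron_smul_s18, kron_mul_s18, sy]
    congr 1
    cases sy1 (p / 4) (q / 4) <;> cases sy1 (p % 4) (q % 4) <;> simp
  cases hs : sy p q
  · simpa [hs] using h
  · simp only [hs, if_true, neg_smul, one_smul] at h
    simp only [Bool.true_eq_false, iff_false]
    intro h2
    have h3 : PP p * PP q = 0 := by
      rw [← h2] at h
      ext i j
      have h5 := congrFun (congrFun h i) j
      rw [Matrix.neg_apply] at h5
      exact self_eq_neg.1 h5
    obtain ⟨c, hc, h4⟩ := PP_mul p q hp hq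
    rw [h3] at h4
    exact PP_ne_zero _ (xor_div p q hp hq).2.2 ((smul_eq_zero.1 h4.symm).resolve_left hc)

lemma PhaseEq.rf {m : Type*} (A : Matrix m m ℂ) : PhaseEq A A := ⟨1, one_ne_zero, by simp⟩

lemma PhaseEq.sm {m : Type*} {A B : Matrix m m ℂ} (h : PhaseEq A B) : PhaseEq B A := by
  obtain ⟨c, hc, rfl⟩ := h
  exact ⟨c⁻¹, inv_ne_zero hc, by rw [smul_smul, inv_mul_cancel₀ hc, one_smul]⟩

lemma PhaseEq.tr {m : Type*} {A B D : Matrix m m ℂ} (h : PhaseEq A B) (h' : PhaseEq B D) :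
    PhaseEq A D := by
  obtain ⟨c, hc, rfl⟩ := h
  obtain ⟨d, hd, rfl⟩ := h'
  exact ⟨c * d, mul_ne_zero hc hd, by rw [smul_smul]⟩

lemma PhaseEq.ml {m : Type*} [Fintype m] {A B D E : Matrix m m ℂ} (h : PhaseEq A B)
    (h' : PhaseEq D E) : PhaseEq (A * D) (B * E) := by
  obtain ⟨c, hc, rfl⟩ := h
  obtain ⟨d, hd, rfl⟩ := h'
  exact ⟨c * d, mul_ne_zero hc hd, by rw [smul_mul_smul_comm]⟩

lemma PP_inj (p q : ℕ) (hp : p < 16) (hq : q < 16) : PhaseEq (PP p) (PP q) ↔ p = q := by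
  refine ⟨fun h => ?_, fun h => h ▸ PhaseEq.rf _⟩
  obtain ⟨-, -, hl⟩ := xor_div p q hp hq
  obtain ⟨c, hc, h1⟩ := (PP_mul p q hp hq).sm.tr ((h.ml (PhaseEq.rf (PP q))).tr (PP_sq q hq))
  by_contra hne
  have hx : p ^^^ q ≠ 0 := fun h0 => hne (Nat.xor_eq_zero_iff.1 h0)
  have ht := congrArg Matrix.trace h1
  rw [PP, kron_trace, Matrix.trace_smul, Matrix.trace_one] at ht
  have h0 : (sg ((p ^^^ q) / 4)).trace * (sg ((p ^^^ q) % 4)).trace = 0 := by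
    by_cases h4 : (p ^^^ q) / 4 = 0
    · rw [sg_trace ((p ^^^ q) % 4) (by omega) (by omega), mul_zero]
    · rw [sg_trace ((p ^^^ q) / 4) (by omega) h4, zero_mul]
  rw [h0] at ht
  simp [hc] at ht

lemma sg_pauli (a : ℕ) : sg a = pI ∨ sg a = pX ∨ sg a = pY ∨ sg a = pZ := by
  unfold sg; split_ifs <;> simp

lemma PP_pauli (p : ℕ) : IsPauliOp 2 (PP p) :=
  ⟨_, fun j => by fin_cases j <;> exact sg_pauli _, rfl⟩

lemma exists_sg (A : Matrix (Fin 2) (Fin 2) ℂ) (h : A = pI ∨ A = pX ∨ A = pY ∨ A = pZ) :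
    ∃ a < 4, A = sg a := by
  rcases h with h | h | h | h
  · exact ⟨0, by norm_num, by simp [sg, h]⟩
  · exact ⟨1, by norm_num, by simp [sg, h]⟩
  · exact ⟨3, by norm_num, by simp [sg, h]⟩
  · exact ⟨2, by norm_num, by simp [sg, h]⟩

lemma exists_code (M : QMat 2) (h : IsPauliOp 2 M ∧ M ≠ 1) : ∃ p < 16, p ≠ 0 ∧ M = PP p := by
  obtain ⟨⟨W, hW, rfl⟩, h1⟩ := h
  obtain ⟨a, ha, ha'⟩ := exists_sg _ (hW 0)
  obtain ⟨b, hb, hb'⟩ := exists_sg _ (hW 1)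
  have e : kron 2 W = PP (4 * a + b) := by
    rw [PP, show (4 * a + b) / 4 = a by omega, show (4 * a + b) % 4 = b by omega, ← ha', ← hb']
    congr 1
    funext j; fin_cases j <;> rfl
  refine ⟨4 * a + b, by omega, ?_, e⟩
  intro h0
  rw [h0, PP_zero] at e
  exact h1 e

/-! ### The finite combinatorial core -/

set_option synthInstance.maxSize 100000 in
set_option synthInstance.maxHeartbeats 0 in
set_option maxSynthPendingDepth 100 in
set_option maxRecDepth 100000 in
lemma third_eq : ∀ a < 16, a ≠ 0 → ∀ b < 16, b ≠ 0 → a ≠ b → sy a b = false →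
    ∀ d < 16, d ≠ 0 → d ≠ a → d ≠ b → sy a d = false → sy b d = false → d = a ^^^ b := by
  decide +kernel

lemma sy_third : ∀ a < 16, ∀ b < 16, sy a b = false →
    sy a (a ^^^ b) = false ∧ sy b (a ^^^ b) = false ∧ sy b a = false ∧ sy a a = false := by
  decide +kernel

/-- The commutation table of all codes, packed into one number, for fast kernel evaluation. -/
def fs (p q : ℕ) : Bool := Nat.beq (Nat.mod (Nat.div
  47759017396062753973214979822864098321531523587131311212147840787252868022272
  (Nat.pow 2 (Nat.add (Nat.mul 16 p) q))) 2) 0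

lemma fs_eq : ∀ p < 16, ∀ q < 16, fs p q = !sy p q := by
  decide +kernel

lemma nbeq (p q : ℕ) : Nat.beq p q = false ↔ p ≠ q := by
  rw [← Bool.not_eq_true, Nat.beq_eq]

/-- `q` is none of `u`, `v`, `u + v`. -/
def nin (u v q : ℕ) : Bool :=
  !(Nat.beq q u || (Nat.beq q v || Nat.beq q (Nat.xor u v)))

lemma nin_iff (u v q : ℕ) : nin u v q = true ↔ q ≠ u ∧ q ≠ v ∧ q ≠ u ^^^ v := by
  change nin u v q = true ↔ q ≠ u ∧ q ≠ v ∧ q ≠ Nat.xor u v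
  simp only [nin, Bool.not_eq_true', Bool.or_eq_false_iff, nbeq]

/-- The numbers below 16. -/
def codes : List ℕ := [0, 1, 2, 3, 4, 5, 6, 7, 8, 9, 10, 11, 12, 13, 14, 15]

lemma mem_codes (p : ℕ) (hp : p < 16) : p ∈ codes := by
  interval_cases p <;> decide

/-- Boolean implication, lazy in its second argument. -/
def im (p q : Bool) : Bool := !p || q

lemma im_mp {p q : Bool} (h : im p q = true) (hp : p = true) : q = true := by
  subst hp; exact h

/-- A commuting pair `r, s` whose line avoids the first two classes. -/
def gd (u v x y r s : ℕ) : Bool :=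
  !Nat.beq r 0 && (!Nat.beq s 0 && (!Nat.beq r s && (fs r s && (nin u v r && (nin u v s &&
    (nin u v (Nat.xor r s) && (nin x y r && (nin x y s && nin x y (Nat.xor r s)))))))))

/-- The line spanned by `r, s` also avoids the line spanned by `a, b`. -/
def av (a b r s : ℕ) : Bool := nin a b r && (nin a b s && nin a b (Nat.xor r s))

/-- `p` is one of `r`, `s`, `t`. -/
def is3 (r s t p : ℕ) : Bool := Nat.beq p r || (Nat.beq p s || Nat.beq p t)

lemma is3_iff (r s t p : ℕ) : is3 r s t p = true ↔ p = r ∨ p = s ∨ p = t := by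
  simp [is3, Nat.beq_eq]

/-- Either the third class is the expected one or one of three lines extends the family. -/
def conc (u v x y a b : ℕ) : Bool :=
  (is3 (Nat.xor u x) (Nat.xor v y) (Nat.xor (Nat.xor u v) (Nat.xor x y)) a &&
    is3 (Nat.xor u x) (Nat.xor v y) (Nat.xor (Nat.xor u v) (Nat.xor x y)) b) ||
  (av a b (Nat.xor u y) (Nat.xor v x) ||
    (av a b (Nat.xor (Nat.xor u y) x) (Nat.xor v y) ||
      av a b (Nat.xor u x) (Nat.xor (Nat.xor v y) x)))

/-- `conc` for every admissible `b`. -/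
def inner4 (u v x y a : ℕ) : Bool := codes.all fun b =>
  im (fs a b && (!Nat.beq b 0 && (!Nat.beq a b && (nin u v b && (nin x y b &&
    (nin u v (Nat.xor a b) && nin x y (Nat.xor a b))))))) (conc u v x y a b)

/-- `inner4` for every admissible `a`, and the three candidate lines are admissible. -/
def inner3 (u v x y : ℕ) : Bool :=
  (gd u v x y (Nat.xor u y) (Nat.xor v x) &&
    (gd u v x y (Nat.xor (Nat.xor u y) x) (Nat.xor v y) &&
      gd u v x y (Nat.xor u x) (Nat.xor (Nat.xor v y) x))) &&
  codes.all fun a => im (!Nat.beq a 0 && (nin u v a && nin x y a)) (inner4 u v x y a)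

/-- `inner3` for every admissible `y`. -/
def inner2 (u v x : ℕ) : Bool := codes.all fun y =>
  im (fs x y && (fs v y && (!Nat.beq y 0 && (!Nat.beq x y &&
    (nin u v y && nin u v (Nat.xor x y)))))) (inner3 u v x y)

/-- `inner2` for every admissible `x`. -/
def inner1 (u v : ℕ) : Bool := codes.all fun x =>
  im (fs u x && (!Nat.beq x 0 && nin u v x)) (inner2 u v x)

/-- `inner1` for every admissible `u`, `v`. -/
def inner0 : Bool := codes.all fun u => codes.all fun v =>
  im (fs u v && (!Nat.beq u 0 && (!Nat.beq v 0 && !Nat.beq u v))) (inner1 u v)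

lemma comb : inner0 = true := by
  decide +kernel

lemma all_codes {f : ℕ → Bool} (h : codes.all f = true) (p : ℕ) (hp : p < 16) : f p = true :=
  List.all_eq_true.1 h p (mem_codes p hp)

/-- Two distinct elements of a three-element line determine the whole line. -/
lemma line_eq (g1 g2 a b : ℕ) (ab : a ≠ b) (ha : a = g1 ∨ a = g2 ∨ a = g1 ^^^ g2)
    (hb : b = g1 ∨ b = g2 ∨ b = g1 ^^^ g2) :
    (∀ g ∈ [a, b, a ^^^ b], g = g1 ∨ g = g2 ∨ g = g1 ^^^ g2) ∧
    g1 ∈ [a, b, a ^^^ b] ∧ g2 ∈ [a, b, a ^^^ b] ∧ g1 ^^^ g2 ∈ [a, b, a ^^^ b] := by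
  have e1 : g1 ^^^ (g1 ^^^ g2) = g2 := by rw [← Nat.xor_assoc, Nat.xor_self, Nat.zero_xor]
  have e2 : g2 ^^^ (g1 ^^^ g2) = g1 := by
    rw [Nat.xor_comm g1, ← Nat.xor_assoc, Nat.xor_self, Nat.zero_xor]
  have e3 : (g1 ^^^ g2) ^^^ g1 = g2 := by rw [Nat.xor_comm, e1]
  have e4 : (g1 ^^^ g2) ^^^ g2 = g1 := by rw [Nat.xor_comm, e2]
  have e5 := Nat.xor_comm g2 g1
  rcases ha with rfl | rfl | rfl <;> rcases hb with rfl | rfl | rfl <;>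
    first
    | exact absurd rfl ab
    | simp_all

lemma ncard_two_le {α : Type*} (a b : α) : ({a, b} : Set α).ncard ≤ 2 :=
  (Set.ncard_insert_le a {b}).trans (by simp)

lemma class_of_pair (r s : ℕ) (hr : r < 16) (hs : s < 16) (r0 : r ≠ 0) (s0 : s ≠ 0) (hne : r ≠ s)
    (hc : sy r s = false) : IsMaxClass 2 {PP r, PP s, PP (r ^^^ s)} := by
  obtain ⟨-, -, ht⟩ := xor_div r s hr hs
  have t0 : r ^^^ s ≠ 0 := fun h => hne (Nat.xor_eq_zero_iff.1 h)
  have tr : r ≠ r ^^^ s := fun h => s0 ((Nat.xor_right_inj (x := r)).1 (by rw [← h, Nat.xor_zero]))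
  have ts : s ≠ r ^^^ s := fun h => r0 ((Nat.xor_right_inj (x := s)).1 (by rw [Nat.xor_comm, ← h, Nat.xor_zero]))
  have neP : ∀ p q, p < 16 → q < 16 → p ≠ q → ¬ PhaseEq (PP p) (PP q) :=
    fun p q hp hq h h' => h ((PP_inj p q hp hq).1 h')
  have ne : ∀ p q, p < 16 → q < 16 → p ≠ q → PP p ≠ PP q :=
    fun p q hp hq h h' => neP p q hp hq h (h' ▸ PhaseEq.rf _)
  obtain ⟨c1, c2, -, -⟩ := sy_third r hr s hs hc
  have k1 := (PP_comm _ _ hr hs).2 hc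
  have k2 := (PP_comm _ _ hr ht).2 c1
  have k3 := (PP_comm _ _ hs ht).2 c2
  have o : ∀ p, p < 16 → p ≠ 0 → IsPauliOp 2 (PP p) ∧ PP p ≠ 1 :=
    fun p hp h => ⟨PP_pauli p, PP_zero ▸ ne p 0 hp (by norm_num) h⟩
  refine ⟨by simp, ?_, ?_, ?_, ?_⟩
  · rw [Set.ncard_eq_three.2 ⟨_, _, _, ne r s hr hs hne, ne _ _ hr ht tr, ne _ _ hs ht ts, rfl⟩]
    norm_num
  · rintro U (rfl | rfl | rfl)
    exacts [o _ hr r0, o _ hs s0, o _ ht t0]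
  · rintro U (rfl | rfl | rfl) V (rfl | rfl | rfl)
    exacts [rfl, k1, k2, k1.symm, rfl, k3, k2.symm, k3.symm, rfl]
  · rintro U (rfl | rfl | rfl) V (rfl | rfl | rfl) h
    exacts [absurd rfl h, neP _ _ hr hs hne, neP _ _ hr ht tr, neP _ _ hs hr hne.symm,
      absurd rfl h, neP _ _ hs ht ts, neP _ _ ht hr tr.symm, neP _ _ ht hs ts.symm, absurd rfl h]

/-- Codes for a class presented as `{U, V, W}` with distinct elements. -/
lemma codes_of_class (U V W : QMat 2) (h : IsMaxClass 2 {U, V, W}) :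
    ∃ u v, u < 16 ∧ v < 16 ∧ u ≠ 0 ∧ v ≠ 0 ∧ u ≠ v ∧ sy u v = false ∧
      U = PP u ∧ V = PP v ∧ W = PP (u ^^^ v) := by
  obtain ⟨-, h3, hp, hc, -⟩ := h
  have d1 : U ≠ V := by
    rintro rfl
    have := ncard_two_le U W
    rw [Set.insert_eq_of_mem (by simp)] at h3
    omega
  have d2 : U ≠ W := by
    rintro rfl
    have := ncard_two_le V U
    rw [Set.insert_eq_of_mem (by simp)] at h3
    omega
  have d3 : V ≠ W := by
    rintro rfl
    have := ncard_two_le U V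
    rw [Set.pair_eq_singleton] at h3
    omega
  obtain ⟨u, hu, u0, rfl⟩ := exists_code U (hp _ (by simp))
  obtain ⟨v, hv, v0, rfl⟩ := exists_code V (hp _ (by simp))
  obtain ⟨w, hw, w0, rfl⟩ := exists_code W (hp _ (by simp))
  have c1 := (PP_comm _ _ hu hv).1 (hc _ (by simp) _ (by simp))
  have c2 := (PP_comm _ _ hu hw).1 (hc _ (by simp) _ (by simp))
  have c3 := (PP_comm _ _ hv hw).1 (hc _ (by simp) _ (by simp))
  have e := third_eq u hu u0 v hv v0 (fun h => d1 (h ▸ rfl)) c1 w hw w0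
    (fun h => d2 (h ▸ rfl)) (fun h => d3 (h ▸ rfl)) c2 c3
  exact ⟨u, v, hu, hv, u0, v0, fun h => d1 (h ▸ rfl), c1, rfl, rfl, e ▸ rfl⟩

/-- In an unextendible family of three pairwise disjoint maximal commuting
Pauli classes in `d = 4`, writing `C 0 = {U₁, V₁, W₁}` and `C 1 = {U₂, V₂, W₂}` with
`W₁ ~ U₁V₁`, `W₂ ~ U₂V₂`, `[U₁, U₂] = 0` and `[V₁, V₂] = 0`, the third class `C 2`
consists, up to phase, exactly of `U₁U₂`, `V₁V₂`, and `U₁V₁U₂V₂`. -/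
theorem third_class_of_unextendible_triple_d4 (C : Fin 3 → Set (QMat 2))
    (hmax : ∀ i, IsMaxClass 2 (C i))
    (hdisj : ∀ i j, i ≠ j → ClassDisjoint (C i) (C j))
    (hunext : ¬ ∃ R : Set (QMat 2), IsMaxClass 2 R ∧
        ∀ U ∈ R, ∀ V ∈ C 0 ∪ C 1 ∪ C 2, ¬ PhaseEq U V)
    (U₁ V₁ W₁ U₂ V₂ W₂ : QMat 2)
    (hC0 : C 0 = {U₁, V₁, W₁}) (hC1 : C 1 = {U₂, V₂, W₂})
    (hW1 : PhaseEq W₁ (U₁ * V₁)) (hW2 : PhaseEq W₂ (U₂ * V₂))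
    (hU : U₁ * U₂ = U₂ * U₁) (hV : V₁ * V₂ = V₂ * V₁) :
    (∀ M ∈ C 2, PhaseEq M (U₁ * U₂) ∨ PhaseEq M (V₁ * V₂) ∨
      PhaseEq M (U₁ * V₁ * (U₂ * V₂))) ∧
    (∃ M ∈ C 2, PhaseEq M (U₁ * U₂)) ∧
    (∃ M ∈ C 2, PhaseEq M (V₁ * V₂)) ∧
    (∃ M ∈ C 2, PhaseEq M (U₁ * V₁ * (U₂ * V₂))) := by
  have m0 := hmax 0
  have m1 := hmax 1
  have m2 := hmax 2
  obtain ⟨A, B, D, -, -, -, hC2⟩ := Set.ncard_eq_three.1 (m2.2.1.trans (by norm_num))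
  have D01 := hdisj 0 1 (by decide)
  have D02 := hdisj 0 2 (by decide)
  have D12 := hdisj 1 2 (by decide)
  rw [hC0] at m0 D01 D02 hunext
  rw [hC1] at m1 D01 D12 hunext
  rw [hC2] at m2 D02 D12 hunext ⊢
  obtain ⟨u, v, hu, hv, u0, v0, uv, cuv, rfl, rfl, rfl⟩ := codes_of_class _ _ _ m0
  obtain ⟨x, y, hx, hy, x0, y0, xy, cxy, rfl, rfl, rfl⟩ := codes_of_class _ _ _ m1
  obtain ⟨a, b, ha, hb, a0, b0, ab, cab, rfl, rfl, rfl⟩ := codes_of_class _ _ _ m2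
  have hw := (xor_div u v hu hv).2.2
  have hz := (xor_div x y hx hy).2.2
  have hd := (xor_div a b ha hb).2.2
  have dj : ∀ p q, p < 16 → q < 16 → ¬ PhaseEq (PP p) (PP q) → q ≠ p :=
    fun p q hp hq h h' => h ((PP_inj p q hp hq).2 h'.symm)
  have n01 : ∀ q < 16, PP q ∈ ({PP x, PP y, PP (x ^^^ y)} : Set (QMat 2)) →
      nin u v q = true := by
    intro q hq hm
    have h1 := dj _ _ hu hq (D01 _ (by simp) _ hm)
    have h2 := dj _ _ hv hq (D01 _ (by simp) _ hm)
    have h3 := dj _ _ hw hq (D01 _ (by simp) _ hm)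
    exact (nin_iff _ _ _).2 ⟨h1, h2, h3⟩
  have n2 : ∀ q < 16, PP q ∈ ({PP a, PP b, PP (a ^^^ b)} : Set (QMat 2)) →
      nin u v q = true ∧ nin x y q = true := by
    intro q hq hm
    have h1 := dj _ _ hu hq (D02 _ (by simp) _ hm)
    have h2 := dj _ _ hv hq (D02 _ (by simp) _ hm)
    have h3 := dj _ _ hw hq (D02 _ (by simp) _ hm)
    have h4 := dj _ _ hx hq (D12 _ (by simp) _ hm)
    have h5 := dj _ _ hy hq (D12 _ (by simp) _ hm)
    have h6 := dj _ _ hz hq (D12 _ (by simp) _ hm)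
    exact ⟨(nin_iff _ _ _).2 ⟨h1, h2, h3⟩, (nin_iff _ _ _).2 ⟨h4, h5, h6⟩⟩
  have hg : ∀ r s, r < 16 → s < 16 → gd u v x y r s = true → av a b r s = true → False := by
    intro r s hr hs hgd hav
    simp only [gd, av, Bool.and_eq_true, Bool.not_eq_true', nbeq,
      fs_eq r hr s hs] at hgd hav
    obtain ⟨r0, s0, rs, crs, i1, i2, i3, i4, i5, i6⟩ := hgd
    obtain ⟨i7, i8, i9⟩ := hav
    have ht := (xor_div r s hr hs).2.2
    refine hunext ⟨_, class_of_pair r s hr hs r0 s0 rs crs, ?_⟩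
    have fin : ∀ q < 16, nin u v q = true → nin x y q = true → nin a b q = true →
        ∀ V ∈ ({PP u, PP v, PP (u ^^^ v)} ∪ {PP x, PP y, PP (x ^^^ y)} ∪
          {PP a, PP b, PP (a ^^^ b)} : Set (QMat 2)), ¬ PhaseEq (PP q) V := by
      intro q hq j1 j2 j3 V hV
      obtain ⟨q1, q2, q3⟩ := (nin_iff _ _ _).1 j1
      obtain ⟨q4, q5, q6⟩ := (nin_iff _ _ _).1 j2
      obtain ⟨q7, q8, q9⟩ := (nin_iff _ _ _).1 j3
      rcases hV with ((rfl | rfl | rfl) | (rfl | rfl | rfl)) | (rfl | rfl | rfl)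
      · exact fun h => q1 ((PP_inj _ _ hq hu).1 h)
      · exact fun h => q2 ((PP_inj _ _ hq hv).1 h)
      · exact fun h => q3 ((PP_inj _ _ hq hw).1 h)
      · exact fun h => q4 ((PP_inj _ _ hq hx).1 h)
      · exact fun h => q5 ((PP_inj _ _ hq hy).1 h)
      · exact fun h => q6 ((PP_inj _ _ hq hz).1 h)
      · exact fun h => q7 ((PP_inj _ _ hq ha).1 h)
      · exact fun h => q8 ((PP_inj _ _ hq hb).1 h)
      · exact fun h => q9 ((PP_inj _ _ hq hd).1 h)
    rintro U (rfl | rfl | rfl)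
    · exact fin r hr i1 i4 i7
    · exact fin s hs i2 i5 i8
    · exact fin _ ht i3 i6 i9
  have lux := (xor_div u x hu hx).2.2
  have lvy := (xor_div v y hv hy).2.2
  have luy := (xor_div u y hu hy).2.2
  have lvx := (xor_div v x hv hx).2.2
  have nb : ∀ {p q : ℕ}, p ≠ q → (!Nat.beq p q) = true := by
    intro p q h
    rw [(nbeq p q).2 h]; rfl
  have fc : ∀ {p q : ℕ}, p < 16 → q < 16 → sy p q = false → fs p q = true := by
    intro p q hp hq h
    rw [fs_eq p hp q hq, h]; rfl
  have tt : ∀ {p q : Bool}, p = true → q = true → (p && q) = true := by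
    rintro _ _ rfl rfl; rfl
  have na := n2 a ha (by simp)
  have nb' := n2 b hb (by simp)
  have nd := n2 _ hd (by simp)
  have q0 := im_mp (all_codes (all_codes comb u hu) v hv)
    (tt (fc hu hv cuv) (tt (nb u0) (tt (nb v0) (nb uv))))
  have q1 := im_mp (all_codes q0 x hx)
    (tt (fc hu hx ((PP_comm _ _ hu hx).1 hU)) (tt (nb x0) (n01 x hx (by simp))))
  have q2 := im_mp (all_codes q1 y hy)
    (tt (fc hx hy cxy) (tt (fc hv hy ((PP_comm _ _ hv hy).1 hV)) (tt (nb y0) (tt (nb xy)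
      (tt (n01 y hy (by simp)) (n01 _ hz (by simp)))))))
  rw [inner3, Bool.and_eq_true, Bool.and_eq_true, Bool.and_eq_true] at q2
  obtain ⟨⟨g1, g2, g3⟩, q2⟩ := q2
  have q3 := im_mp (all_codes q2 a ha) (tt (nb a0) (tt na.1 na.2))
  have q4 := im_mp (all_codes q3 b hb) (tt (fc ha hb cab) (tt (nb b0) (tt (nb ab)
    (tt nb'.1 (tt nb'.2 (tt nd.1 nd.2))))))
  have q5 := hg _ _ luy lvx g1
  have q6 := hg _ _ (xor_div _ x luy hx).2.2 lvy g2
  have q7 := hg _ _ lux (xor_div _ x lvy hx).2.2 g3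
  rw [conc, Bool.or_eq_true, Bool.or_eq_true, Bool.or_eq_true, Bool.and_eq_true] at q4
  have q8 := q4.resolve_right (by rintro (h | h | h); exacts [q5 h, q6 h, q7 h])
  have ex : (u ^^^ v) ^^^ (x ^^^ y) = (u ^^^ x) ^^^ (v ^^^ y) := by
    rw [Nat.xor_assoc, Nat.xor_assoc, ← Nat.xor_assoc v, ← Nat.xor_assoc x, Nat.xor_comm v x]
  have s1 : a = u ^^^ x ∨ a = v ^^^ y ∨ a = (u ^^^ v) ^^^ (x ^^^ y) := (is3_iff _ _ _ _).1 q8.1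
  have s2 : b = u ^^^ x ∨ b = v ^^^ y ∨ b = (u ^^^ v) ^^^ (x ^^^ y) := (is3_iff _ _ _ _).1 q8.2
  obtain ⟨r1, r2, r3, r4⟩ := line_eq (u ^^^ x) (v ^^^ y) a b ab (ex ▸ s1) (ex ▸ s2)
  rw [← ex] at r4
  simp only [← ex] at r1
  have e1 := (PP_mul u x hu hx).sm
  have e2 := (PP_mul v y hv hy).sm
  have e3 : PhaseEq (PP ((u ^^^ v) ^^^ (x ^^^ y))) (PP u * PP v * (PP x * PP y)) :=
    (((PP_mul u v hu hv).ml (PP_mul x y hx hy)).tr (PP_mul _ _ hw hz)).sm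
  have mem : ∀ g ∈ [a, b, a ^^^ b], PP g ∈ ({PP a, PP b, PP (a ^^^ b)} : Set (QMat 2)) := by
    intro g hgm
    simp only [List.mem_cons, List.not_mem_nil, or_false] at hgm
    rcases hgm with rfl | rfl | rfl <;> simp
  refine ⟨?_, ⟨_, mem _ r2, e1⟩, ⟨_, mem _ r3, e2⟩, ⟨_, mem _ r4, e3⟩⟩
  have all : ∀ g ∈ [a, b, a ^^^ b], PhaseEq (PP g) (PP u * PP x) ∨ PhaseEq (PP g) (PP v * PP y) ∨
      PhaseEq (PP g) (PP u * PP v * (PP x * PP y)) := by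
    intro g hgm
    rcases r1 g hgm with h | h | h
    · exact Or.inl (h ▸ e1)
    · exact Or.inr (Or.inl (h ▸ e2))
    · exact Or.inr (Or.inr (h ▸ e3))
  rintro M (rfl | rfl | rfl)
  · exact all a (by simp)
  · exact all b (by simp)
  · exact all _ (by simp)
end
end
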